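/- Let D be a regular domain. If Π(a_1, a_m) is a singleton set (exactly one vertex-path of G_≈^A(D) connects a_1 and a_m), then every preference in D is single-peaked w.r.t. ≺, and D is a hybrid* domain. -/

import Mathlib

open Finset

noncomputable section

/-- A preference is a linear order over the `m` alternatives, represented as a bijection
from rank positions (0-based: position `0` is the top) to alternatives. -/
abbrev Pref (m : ℕ) := Fin m ≃ Fin m

namespace PFBRPaper

variable {m n : ℕ}

/-- `a` is strictly preferred to `b` under `P`. -/
def Prefers (P : Pref m) (a b : Fin m) : Prop := P.symm a < P.symm b

/-- The last alternative `a_m` (0-based index `m-1`). -/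
def lastAlt (m : ℕ) [NeZero m] : Fin m :=
  ⟨m - 1, Nat.sub_lt (Nat.pos_of_ne_zero (NeZero.ne m)) Nat.one_pos⟩

/-- Every alternative is top-ranked by some preference in the domain. -/
def MinimallyRich [NeZero m] (D : Set (Pref m)) : Prop :=
  ∀ a : Fin m, ∃ P ∈ D, P 0 = a

/-- The preference ranking `a_m` first, ..., `a_1` last. -/
def revPref (m : ℕ) : Pref m :=
  ⟨Fin.rev, Fin.rev, fun i => Fin.rev_rev i, fun i => Fin.rev_rev i⟩

/-- Diversity, with the labeling convention: the domain contains the preference ranking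
`a_1` first, `a_2` second, ..., `a_m` last (the identity), together with its
complete reversal. -/
def Diversity (D : Set (Pref m)) : Prop :=
  Equiv.refl (Fin m) ∈ D ∧ revPref m ∈ D

/-- Two preferences are adjacent: the alternatives at two contiguous rank positions are
swapped and everything else is unchanged. -/
def Adjacent (P P' : Pref m) : Prop :=
  P ≠ P' ∧ ∃ k : ℕ, ∃ hk : k + 1 < m,
    P ⟨k, Nat.lt_of_succ_lt hk⟩ = P' ⟨k + 1, hk⟩ ∧
    P ⟨k + 1, hk⟩ = P' ⟨k, Nat.lt_of_succ_lt hk⟩ ∧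
    ∀ l : Fin m, (l : ℕ) ≠ k → (l : ℕ) ≠ k + 1 → P l = P' l

/-- `π 0, …, π (v-1)` is a path in `D` connecting `P` and `P'`. -/
def IsPath (D : Set (Pref m)) (P P' : Pref m) (π : ℕ → Pref m) (v : ℕ) : Prop :=
  1 ≤ v ∧ (∀ i < v, π i ∈ D) ∧
  (∀ i < v, ∀ j < v, π i = π j → i = j) ∧
  π 0 = P ∧ π (v - 1) = P' ∧
  ∀ i, i + 1 < v → Adjacent (π i) (π (i + 1))

/-- The path `π 0, …, π (v-1)` has no `{a,b}`-restoration: the relative ranking of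
`a` and `b` switches at most once along the path. -/
def NoRestoration (π : ℕ → Pref m) (v : ℕ) (a b : Fin m) : Prop :=
  ∀ i j k : ℕ, i < j → j < k → k < v →
    ¬(Prefers (π i) a b ∧ Prefers (π j) b a ∧ Prefers (π k) a b) ∧
    ¬(Prefers (π i) b a ∧ Prefers (π j) a b ∧ Prefers (π k) b a)

def NoRestorationDomain (D : Set (Pref m)) : Prop :=
  ∀ P ∈ D, ∀ P' ∈ D, P ≠ P' → ∀ a b : Fin m,
    ∃ π v, IsPath D P P' π v ∧ NoRestoration π v a b

def RegularDomain [NeZero m] (D : Set (Pref m)) : Prop :=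
  MinimallyRich D ∧ Diversity D ∧ NoRestorationDomain D

/-- `a ≈ b`: the two alternatives are strongly connected in the domain `D`. -/
def StronglyConnected [NeZero m] (D : Set (Pref m)) (a b : Fin m) : Prop :=
  a ≠ b ∧ ∃ P ∈ D, ∃ P' ∈ D,
    P 0 = a ∧ P 1 = b ∧ P' 0 = b ∧ P' 1 = a ∧
    ∀ k : Fin m, 2 ≤ (k : ℕ) → P k = P' k

/-- `l` is a vertex-path of the graph `G_≈^B(D)`. -/
def IsVertexPathOn [NeZero m] (D : Set (Pref m)) (B : Set (Fin m)) (l : List (Fin m)) : Prop :=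
  l ≠ [] ∧ l.Nodup ∧ (∀ x ∈ l, x ∈ B) ∧ l.Chain' (StronglyConnected D)

/-- `l` is a vertex-path of `G_≈^B(D)` connecting `a` and `b`. -/
def VertexPathBetween [NeZero m] (D : Set (Pref m)) (B : Set (Fin m)) (a b : Fin m)
    (l : List (Fin m)) : Prop :=
  IsVertexPathOn D B l ∧ l.head? = some a ∧ l.getLast? = some b

/-- `a` is a leaf of the subgraph `G_≈^B(D)`. -/
def IsLeaf [NeZero m] (D : Set (Pref m)) (B : Set (Fin m)) (a : Fin m) : Prop :=
  a ∈ B ∧ ∃! b : Fin m, b ∈ B ∧ StronglyConnected D a b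

/-- Single-peakedness w.r.t. the natural order. -/
def SinglePeaked [NeZero m] (P : Pref m) : Prop :=
  ∀ a b : Fin m, ((a < b ∧ b < P 0) ∨ (P 0 < b ∧ b < a)) → Prefers P b a

/-- A `(p,q)`-hybrid preference (thresholds `p < q`, 0-based). -/
def IsHybridPref [NeZero m] (p q : Fin m) (P : Pref m) : Prop :=
  (∀ r s : Fin m, ((r ≤ p ∧ s ≤ p) ∨ (q ≤ r ∧ q ≤ s)) →
      ((r < s ∧ s < P 0) ∨ (P 0 < s ∧ s < r)) → Prefers P s r) ∧
  (P 0 ≤ p → ∀ l : Fin m, p ≤ l → l ≤ q → l ≠ p → Prefers P p l) ∧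
  (q ≤ P 0 → ∀ l : Fin m, p ≤ l → l ≤ q → l ≠ q → Prefers P q l)

/-- The `(p,q)`-hybrid domain of all `(p,q)`-hybrid preferences. -/
def hybridDomain [NeZero m] (p q : Fin m) : Set (Pref m) := {P | IsHybridPref p q P}

/-- `D` is a `(p,q)`-hybrid* domain. -/
def IsHybridStar [NeZero m] (D : Set (Pref m)) (p q : Fin m) : Prop :=
  D ⊆ hybridDomain p q ∧
  (∀ k : Fin m, k ≠ 0 → k ≠ lastAlt m →
      ∃ l, VertexPathBetween D Set.univ 0 (lastAlt m) l ∧ k ∈ l) ∧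
  ((p : ℕ) + 1 < (q : ℕ) → ∀ a : Fin m, ¬ IsLeaf D (Set.Icc p q) a)

/-- A lottery over the alternatives. -/
def Lottery (m : ℕ) : Type :=
  {f : Fin m → ℝ // (∀ a, 0 ≤ f a) ∧ ∑ a, f a = 1}

/-- The probability that a lottery assigns to a set of alternatives. -/
def Lottery.prob (lam : Lottery m) (B : Finset (Fin m)) : ℝ := ∑ a ∈ B, lam.1 a

/-- The support of a lottery. -/
def Lottery.supp (lam : Lottery m) : Finset (Fin m) :=
  Finset.univ.filter (fun a => 0 < lam.1 a)

/-- The degenerate lottery on `a`. -/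
def degLottery (a : Fin m) : Lottery m :=
  ⟨fun b => if b = a then 1 else 0,
   fun b => by by_cases h : b = a <;> simp [h],
   by simp⟩

/-- A profile of preferences drawn from the domain `D`. -/
abbrev Profile (D : Set (Pref m)) (n : ℕ) := Fin n → D

/-- The top-ranked alternative of a preference in the domain. -/
def topOf [NeZero m] {D : Set (Pref m)} (P : D) : Fin m := P.1 0

def Unanimous [NeZero m] {D : Set (Pref m)} (φ : Profile D n → Lottery m) : Prop :=
  ∀ (P : Profile D n) (a : Fin m), (∀ i, topOf (P i) = a) → φ P = degLottery a

/-- The total probability of the `k` top-ranked alternatives of `P` under `lam`. -/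
def topSum (lam : Lottery m) (P : Pref m) (k : ℕ) : ℝ :=
  ∑ t ∈ Finset.univ.filter (fun t : Fin m => (t : ℕ) < k), lam.1 (P t)

/-- Strategy-proofness: truth-telling first-order stochastically dominates any unilateral
misrepresentation. -/
def StrategyProof {D : Set (Pref m)} (φ : Profile D n → Lottery m) : Prop :=
  ∀ (i : Fin n) (P : Profile D n) (Pi' : D) (k : ℕ), k ≤ m →
    topSum (φ (Function.update P i Pi')) (P i).1 k ≤ topSum (φ P) (P i).1 k

def TopsOnly [NeZero m] {D : Set (Pref m)} (φ : Profile D n → Lottery m) : Prop :=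
  ∀ P P' : Profile D n, (∀ i, topOf (P i) = topOf (P' i)) → φ P = φ P'

def Anonymous {D : Set (Pref m)} (φ : Profile D n → Lottery m) : Prop :=
  ∀ (P : Profile D n) (σ : Equiv.Perm (Fin n)), φ (P ∘ σ) = φ P

/-- The interval `[a_k, a_m]`. -/
def upSet (k : Fin m) : Finset (Fin m) := Finset.univ.filter (fun a => k ≤ a)

/-- The interval `[a_1, a_k]`. -/
def downSet (k : Fin m) : Finset (Fin m) := Finset.univ.filter (fun a => a ≤ k)

/-- The interval `[a_p, a_q]`. -/
def midSet (p q : Fin m) : Finset (Fin m) := Finset.univ.filter (fun a => p ≤ a ∧ a ≤ q)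

/-- `S(k,P)`: the voters whose preference top is not to the left of `a_k`. -/
def voterSet [NeZero m] {D : Set (Pref m)} (P : Profile D n) (k : Fin m) : Finset (Fin n) :=
  Finset.univ.filter (fun i => k ≤ topOf (P i))

/-- `β_{S(k,P)}([a_k, a_m])`, with the convention that it is `0` for `k = m`. -/
def tailProb [NeZero m] {D : Set (Pref m)} (β : Finset (Fin n) → Lottery m)
    (P : Profile D n) (k : ℕ) : ℝ :=
  if h : k < m then (β (voterSet P ⟨k, h⟩)).prob (upSet ⟨k, h⟩) else 0

def BallotUnanimity [NeZero m] (β : Finset (Fin n) → Lottery m) : Prop :=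
  β Finset.univ = degLottery (lastAlt m) ∧ β ∅ = degLottery 0

def BallotMonotone (β : Finset (Fin n) → Lottery m) : Prop :=
  ∀ S T : Finset (Fin n), S ⊂ T →
    ∀ k : Fin m, (β S).prob (upSet k) ≤ (β T).prob (upSet k)

/-- `φ` is a probabilistic fixed ballot rule with probabilistic ballots `β`. -/
def IsPFBRWith [NeZero m] {D : Set (Pref m)} (φ : Profile D n → Lottery m)
    (β : Finset (Fin n) → Lottery m) : Prop :=
  BallotUnanimity β ∧ BallotMonotone β ∧
  ∀ (P : Profile D n) (k : Fin m),
    (φ P).1 k = tailProb β P (k : ℕ) - tailProb β P ((k : ℕ) + 1)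

def IsPFBR [NeZero m] {D : Set (Pref m)} (φ : Profile D n → Lottery m) : Prop :=
  ∃ β, IsPFBRWith φ β

/-- The constrained random-dictatorship condition w.r.t. `a_p` and `a_q`. -/
def ConstrainedRD (p q : Fin m) (β : Finset (Fin n) → Lottery m) : Prop :=
  ∃ ε : Fin n → ℝ, (∀ i, 0 ≤ ε i) ∧ ∑ i, ε i = 1 ∧
    ∀ S : Finset (Fin n),
      (β S).prob (upSet q) = ∑ i ∈ S, ε i ∧
      (β S).prob (downSet p) = ∑ i ∈ Sᶜ, ε i

/-- The constrained random-dictatorship condition w.r.t. `a_p` and `a_q` with every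
conditional dictatorial coefficient equal to `1/n`. -/
def ConstrainedRDUniform (p q : Fin m) (β : Finset (Fin n) → Lottery m) : Prop :=
  ∀ S : Finset (Fin n),
    (β S).prob (upSet q) = (S.card : ℝ) / (n : ℝ) ∧
    (β S).prob (downSet p) = ((Sᶜ : Finset (Fin n)).card : ℝ) / (n : ℝ)

/-- Anonymity at the level of probabilistic ballots. -/
def BallotAnonymous (β : Finset (Fin n) → Lottery m) : Prop :=
  ∀ S S' : Finset (Fin n), S.Nonempty → S'.Nonempty → S.card = S'.card → β S = β S'

/-- Per-capita monotonicity w.r.t. `a_p` and `a_q`. -/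
def PerCapitaMonotone (p q : Fin m) (β : Finset (Fin n) → Lottery m) : Prop :=
  ∀ S S' : Finset (Fin n), S.Nonempty → S ⊂ S' → S' ⊂ Finset.univ →
    (∀ t : Fin m, q ≤ t →
      (β S).prob (upSet t) / (S.card : ℝ) ≤ (β S').prob (upSet t) / (S'.card : ℝ)) ∧
    (∀ s : Fin m, s ≤ p →
      (β Sᶜ).prob (downSet s) / (S.card : ℝ) ≤ (β S'ᶜ).prob (downSet s) / (S'.card : ℝ))

/-- Decomposability: `φ` is a mixture of finitely many unanimous and strategy-proof
deterministic social choice functions. -/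
def Decomposable [NeZero m] {D : Set (Pref m)} (φ : Profile D n → Lottery m) : Prop :=
  ∃ (r : ℕ) (f : Fin r → (Profile D n → Fin m)) (α : Fin r → ℝ),
    (∀ k, 0 < α k) ∧ ∑ k, α k = 1 ∧
    (∀ k, Unanimous (fun P => degLottery (f k P)) ∧
          StrategyProof (fun P => degLottery (f k P))) ∧
    ∀ (P : Profile D n) (a : Fin m),
      (φ P).1 a = ∑ k, α k * (if f k P = a then 1 else 0)

/-- `b̂_S^R`: the `≺`-minimum of `supp(β_S) ∩ R` (with the convention `b̂_N^R = a_m`). -/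
def bR [NeZero m] (β : Finset (Fin n) → Lottery m) (q : Fin m) (S : Finset (Fin n)) : Fin m :=
  if h : ((β S).supp ∩ upSet q).Nonempty then ((β S).supp ∩ upSet q).min' h else lastAlt m

/-- `b̂_S^L`: the `≺`-maximum of `supp(β_S) ∩ L` (with the convention `b̂_∅^L = a_1`). -/
def bL [NeZero m] (β : Finset (Fin n) → Lottery m) (p : Fin m) (S : Finset (Fin n)) : Fin m :=
  if h : ((β S).supp ∩ downSet p).Nonempty then ((β S).supp ∩ downSet p).max' h else 0

/-- `α = min over nonempty S ⊂ N of min(β_S(b̂_S^R)/|S|, β_S(b̂_S^L)/(n-|S|))`. -/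
def alphaVal [NeZero m] (β : Finset (Fin n) → Lottery m) (p q : Fin m) : ℝ :=
  sInf {x : ℝ | ∃ S : Finset (Fin n), S.Nonempty ∧ S ≠ Finset.univ ∧
    x = min ((β S).1 (bR β q S) / (S.card : ℝ))
            ((β S).1 (bL β p S) / ((n : ℝ) - (S.card : ℝ)))}

/-- `γ_S = (|S|/n) e_{b̂_S^R} + ((n-|S|)/n) e_{b̂_S^L}`, pointwise. -/
def gammaFun [NeZero m] (β : Finset (Fin n) → Lottery m) (p q : Fin m)
    (S : Finset (Fin n)) (a : Fin m) : ℝ :=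
  ((S.card : ℝ) / (n : ℝ)) * (if a = bR β q S then 1 else 0)
  + (((n : ℝ) - (S.card : ℝ)) / (n : ℝ)) * (if a = bL β p S then 1 else 0)

/-- The max-min formula `f(P) = max_{S ⊆ N} min({r_1(P_j) : j ∈ S} ∪ {b_S})`. -/
def fbrOutcome [NeZero m] {D : Set (Pref m)} (b : Finset (Fin n) → Fin m)
    (P : Profile D n) : Fin m :=
  Finset.univ.sup' Finset.univ_nonempty
    (fun S : Finset (Fin n) =>
      (insert (b S) (S.image (fun j => topOf (P j)))).inf' (Finset.insert_nonempty _ _) id)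

/-- `f` is a `(p,q)`-fixed ballot rule with deterministic ballots `b` and constrained
dictator `i`. -/
def IsFBRWith [NeZero m] {D : Set (Pref m)} (p q : Fin m) (f : Profile D n → Fin m)
    (b : Finset (Fin n) → Fin m) (i : Fin n) : Prop :=
  b Finset.univ = lastAlt m ∧ b ∅ = 0 ∧
  (∀ S T : Finset (Fin n), S ⊂ T → b S ≤ b T) ∧
  (∀ S : Finset (Fin n), (i ∈ S → q ≤ b S) ∧ (i ∉ S → b S ≤ p)) ∧
  ∀ P : Profile D n, f P = fbrOutcome b P

end PFBRPaper

namespace PFBRPaper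

theorem sc_symm {m : ℕ} [NeZero m] {D : Set (Pref m)} {a b : Fin m}
    (h : StronglyConnected D a b) : StronglyConnected D b a := by
  obtain ⟨hab, P, hP, P', hP', h1, h2, h3, h4, h5⟩ := h
  exact ⟨hab.symm, P', hP', P, hP, h3, h4, h1, h2, fun k hk => (h5 k hk).symm⟩

theorem adj_top {m : ℕ} [NeZero m] (hm : 3 ≤ m) {D : Set (Pref m)} {P P' : Pref m}
    (hP : P ∈ D) (hP' : P' ∈ D) (h : Adjacent P P') :
    P 0 = P' 0 ∨ StronglyConnected D (P 0) (P' 0) := by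
  obtain ⟨_, k, hk, h1, h2, h3⟩ := h
  rcases Nat.eq_zero_or_pos k with rfl | hk0
  · right
    have e0 : (⟨0, Nat.lt_of_succ_lt hk⟩ : Fin m) = 0 := by ext; simp
    have e1 : (⟨0 + 1, hk⟩ : Fin m) = 1 := by
      ext
      rw [Fin.val_one']
      exact (Nat.mod_eq_of_lt (by omega)).symm
    rw [e0, e1] at h1 h2
    refine ⟨?_, P, hP, P', hP', rfl, h2, rfl, h1.symm, ?_⟩
    · rw [h1]
      intro h
      have := P'.injective h
      rw [← e0, ← e1] at this
      simp at this
    · intro k hk2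
      exact h3 k (by omega) (by omega)
  · left
    apply h3 <;> simp <;> omega

theorem not_prefers {m : ℕ} {P : Pref m} {a b : Fin m} (hab : a ≠ b)
    (h : ¬ Prefers P a b) : Prefers P b a := by
  unfold Prefers at *
  have : P.symm a ≠ P.symm b := fun h => hab (P.symm.injective h)
  omega

theorem prefers_asymm {m : ℕ} {P : Pref m} {a b : Fin m} 
    (h : Prefers P a b) : ¬ Prefers P b a := by
  unfold Prefers at *
  omega

theorem prefers_top {m : ℕ} [NeZero m] {P : Pref m} {a : Fin m} (h : a ≠ P 0) :
    Prefers P (P 0) a := by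
  unfold Prefers
  rw [Equiv.symm_apply_apply]
  apply Fin.pos_iff_ne_zero.2
  intro h'
  exact h (by rw [← h', Equiv.apply_symm_apply])

theorem key {m : ℕ} [NeZero m] (hm : 3 ≤ m) {D : Set (Pref m)} (hD : RegularDomain D)
    {P : Pref m} (hP : P ∈ D) {a b : Fin m} (hab : b ≠ a) (S : Set (Fin m))
    (hcut : ∀ u v, StronglyConnected D u v → u ∈ S → v ∉ S → u = b ∨ v = b)
    (h : ¬ (P 0 ∈ S ↔ a ∈ S)) : Prefers P b a := by
  by_contra hn
  have hn' := not_prefers hab hn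
  obtain ⟨P', hP', ht⟩ := hD.1 a
  have hne : P ≠ P' := by
    rintro rfl
    exact h (by rw [ht])
  obtain ⟨π, v, ⟨hv, hin, _, h0, hl, hadj⟩, hnr⟩ := hD.2.2 P hP P' hP' hne b a
  have hlast : Prefers P' a b := by
    have := prefers_top (P := P') (a := b) (by rw [ht]; exact hab)
    rwa [ht] at this
  have hall : ∀ i, i < v → Prefers (π i) a b := by
    intro i hi
    by_contra hc
    have hc' := not_prefers hab.symm hc
    have hi0 : i ≠ 0 := by
      rintro rfl
      rw [h0] at hc; exact hc hn'
    have hi1 : i ≠ v - 1 := by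
      rintro rfl
      rw [hl] at hc; exact hc hlast
    exact (hnr 0 i (v-1) (by omega) (by omega) (by omega)).2
      ⟨by rwa [h0], hc', by rwa [hl]⟩
  have htop : ∀ i, i < v → π i 0 ≠ b := by
    intro i hi hb
    have := prefers_top (P := π i) (a := a) (by rw [hb]; exact hab.symm)
    rw [hb] at this
    exact prefers_asymm this (hall i hi)
  have hind : ∀ i, i < v → (P 0 ∈ S ↔ π i 0 ∈ S) := by
    intro i
    induction i with
    | zero => intro _; rw [h0]
    | succ i ih =>
      intro hi
      rw [ih (by omega)]
      have t1 := htop i (by omega)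
      have t2 := htop (i+1) hi
      rcases adj_top hm (hin i (by omega)) (hin (i+1) hi) (hadj i hi) with he | hs
      · rw [he]
      · constructor
        · intro hx
          by_contra hy
          rcases hcut _ _ hs hx hy with h | h
          · exact t1 h
          · exact t2 h
        · intro hx
          by_contra hy
          rcases hcut _ _ (sc_symm hs) hx hy with h | h
          · exact t2 h
          · exact t1 h
  apply h
  have := hind (v-1) (by omega)
  rwa [hl, ht] at this

/-- The graph of strong connections with the edge `{p,q}` removed. -/
def delGraph {m : ℕ} [NeZero m] (D : Set (Pref m)) (p q : Fin m) : SimpleGraph (Fin m) where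
  Adj u v := StronglyConnected D u v ∧ s(u, v) ≠ s(p, q)
  symm := ⟨fun u v h => ⟨sc_symm h.1, by rw [Sym2.eq_swap]; exact h.2⟩⟩
  loopless := ⟨fun u h => h.1.1 rfl⟩

theorem main_struct {m : ℕ} [NeZero m] (hm : 3 ≤ m) {D : Set (Pref m)} (hD : RegularDomain D)
    (l : List (Fin m)) (hl : VertexPathBetween D Set.univ 0 (lastAlt m) l)
    (hu : ∀ l', VertexPathBetween D Set.univ 0 (lastAlt m) l' → l' = l) :
    (∀ P ∈ D, SinglePeaked P) ∧ ∀ t, t ∈ l := by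
  obtain ⟨⟨hne, hnd, -, hch⟩, hhead, hlast⟩ := hl
  have hlen : 0 < l.length := List.length_pos_iff.2 hne
  obtain ⟨n, hn⟩ : ∃ n, l.length = n + 1 := ⟨l.length - 1, by omega⟩
  obtain ⟨x, hx⟩ : ∃ x : ℕ → Fin m, ∀ i (hi : i < l.length), x i = l[i] :=
    ⟨fun i => l.getD i 0, fun i hi => by simp [hi]⟩
  have x0 : x 0 = 0 := by
    rw [hx 0 hlen]
    rw [List.head?_eq_getElem?, List.getElem?_eq_getElem hlen] at hhead
    exact Option.some.inj hhead
  have xn : x n = lastAlt m := by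
    rw [hx n (by omega)]
    rw [List.getLast?_eq_getElem?, List.getElem?_eq_getElem (by omega)] at hlast
    have := Option.some.inj hlast
    rw [← this]
    congr 1
    omega
  have xinj : ∀ i j, i ≤ n → j ≤ n → x i = x j → i = j := by
    intro i j hi hj h
    rw [hx i (by omega), hx j (by omega)] at h
    exact (hnd.getElem_inj_iff).1 h
  have xsc : ∀ i, i < n → StronglyConnected D (x i) (x (i+1)) := by
    intro i hi
    rw [hx i (by omega), hx (i+1) (by omega)]
    exact List.isChain_iff_getElem.1 hch i (by omega)
  let S : ℕ → Set (Fin m) := fun i => {v | (delGraph D (x i) (x (i+1))).Reachable 0 v}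
  have step : ∀ i j, i < n → j < n → i ≠ j → (x j ∈ S i ↔ x (j+1) ∈ S i) := by
    intro i j hi hj hij
    have hadj : (delGraph D (x i) (x (i+1))).Adj (x j) (x (j+1)) := by
      refine ⟨xsc j hj, ?_⟩
      intro h
      rcases Sym2.eq_iff.1 h with ⟨h1, h2⟩ | ⟨h1, h2⟩
      · exact hij (xinj _ _ (by omega) (by omega) h1).symm
      · have := xinj _ _ (by omega) (by omega) h1
        have := xinj _ _ (by omega) (by omega) h2
        omega
    exact ⟨fun h => h.trans hadj.reachable, fun h => h.trans hadj.symm.reachable⟩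
  have inS : ∀ i, i < n → ∀ j, j ≤ i → x j ∈ S i := by
    intro i hi j
    induction j with
    | zero => intro _; rw [x0]; exact SimpleGraph.Reachable.refl _
    | succ j ih => intro hj; exact (step i j hi (by omega) (by omega)).1 (ih (by omega))
  have lastS : ∀ i, i < n → x n ∉ S i := by
    intro i hi h
    rw [xn] at h
    obtain ⟨p, hp⟩ := SimpleGraph.Reachable.exists_isPath h
    have hc := p.isChain_adj_support
    have : p.support = l := by
      apply hu
      refine ⟨⟨by simp, hp.support_nodup, fun _ _ => trivial, ?_⟩, ?_, ?_⟩
      · exact hc.imp (fun _ _ h => h.1)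
      · rw [List.head?_eq_some_head p.support_ne_nil]; simp
      · rw [List.getLast?_eq_some_getLast p.support_ne_nil]; simp
    rw [this] at hc
    have := List.isChain_iff_getElem.1 hc i (by omega)
    rw [← hx i (by omega), ← hx (i+1) (by omega)] at this
    exact this.2 rfl
  have notS : ∀ i, i < n → ∀ j, i < j → j ≤ n → x j ∉ S i := by
    intro i hi j hij hj
    have : ∀ d, d ≤ n - j → (x j ∈ S i → x (j + d) ∈ S i) := by
      intro d
      induction d with
      | zero => intro _ h; exact h
      | succ d ih =>
        intro hd h
        exact (step i (j+d) hi (by omega) (by omega)).1 (ih (by omega) h)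
    intro h
    have := this (n - j) le_rfl h
    rw [show j + (n - j) = n by omega] at this
    exact lastS i hi this
  have cut : ∀ i, i < n → ∀ u v, StronglyConnected D u v → u ∈ S i → v ∉ S i →
      u = x i ∧ v = x (i+1) := by
    intro i hi u v huv hu hv
    have : s(u, v) = s(x i, x (i+1)) := by
      by_contra hs
      exact hv (SimpleGraph.Reachable.trans hu
        (SimpleGraph.Adj.reachable (G := delGraph D (x i) (x (i+1))) ⟨huv, hs⟩))
    rcases Sym2.eq_iff.1 this with h | ⟨h1, h2⟩
    · exact h
    · exfalso
      rw [h1] at hu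
      exact notS i hi (i+1) (by omega) (by omega) hu
  have hId := hD.2.1.1
  have hRev := hD.2.1.2
  have idlt : ∀ a b : Fin m, Prefers (Equiv.refl (Fin m)) a b → a < b := by
    intro a b h; exact h
  have revlt : ∀ a b : Fin m, Prefers (revPref m) a b → b < a := by
    intro a b h
    have h : Fin.rev a < Fin.rev b := h
    exact Fin.rev_lt_rev.1 h
  have rev0 : revPref m 0 = x n := by
    rw [xn]
    ext
    simp [revPref, lastAlt]
  have id0 : (Equiv.refl (Fin m)) 0 = x 0 := by rw [x0]; rfl
  -- general crossing facts
  have right : ∀ P ∈ D, ∀ i, i < n → ∀ a, P 0 ∈ S i → a ∉ S i → Prefers P (x i) a := by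
    intro P hP i hi a h1 h2
    refine key hm hD hP ?_ (S i) (fun u v h hu hv => Or.inl (cut i hi u v h hu hv).1) (by tauto)
    rintro rfl
    exact h2 (inS i hi i le_rfl)
  have left : ∀ P ∈ D, ∀ i, i < n → ∀ a, P 0 ∉ S i → a ∈ S i → Prefers P (x (i+1)) a := by
    intro P hP i hi a h1 h2
    refine key hm hD hP ?_ (S i) (fun u v h hu hv => Or.inr (cut i hi u v h hu hv).2) (by tauto)
    rintro rfl
    exact notS i hi (i+1) (by omega) (by omega) h2
  have right' : ∀ P ∈ D, ∀ i, i < n → ∀ a, P 0 ∈ S i → a ∉ S i → a ≠ x (i+1) →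
      Prefers P (x (i+1)) a := by
    intro P hP i hi a h1 h2 h3
    exact key hm hD hP h3.symm (S i)
      (fun u v h hu hv => Or.inr (cut i hi u v h hu hv).2) (by tauto)
  have left' : ∀ P ∈ D, ∀ i, i < n → ∀ a, P 0 ∉ S i → a ∈ S i → a ≠ x i →
      Prefers P (x i) a := by
    intro P hP i hi a h1 h2 h3
    exact key hm hD hP h3.symm (S i)
      (fun u v h hu hv => Or.inl (cut i hi u v h hu hv).1) (by tauto)
  have mono : ∀ i j, i < j → j ≤ n → x i < x j := by
    intro i j hij hj
    apply idlt
    apply right _ hId i (by omega)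
    · rw [id0]; exact inS i (by omega) 0 (by omega)
    · exact notS i (by omega) j hij hj
  have mono' : ∀ i j, i ≤ n → j ≤ n → x i < x j → i < j := by
    intro i j hi hj h
    by_contra hc
    rcases Nat.lt_or_ge j i with h' | h'
    · exact absurd (mono j i h' hi) (not_lt.2 h.le)
    · have : i = j := by omega
      subst this
      exact lt_irrefl _ h
  have surj : ∀ t, ∃ i, i ≤ n ∧ x i = t := by
    intro t
    by_contra hc
    push Not at hc
    -- least index whose cut contains t, with S n read as everything
    have hex : ∃ i, i = n ∨ (i < n ∧ t ∈ S i) := ⟨n, Or.inl rfl⟩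
    classical
    let i := Nat.find hex
    have hi : i = n ∨ (i < n ∧ t ∈ S i) := Nat.find_spec hex
    have hmin : ∀ j, j < i → ¬ (j = n ∨ (j < n ∧ t ∈ S j)) := fun j hj => Nat.find_min hex hj
    have hile : i ≤ n := by omega
    have h1 : x i < t := by
      apply idlt
      rcases Nat.eq_zero_or_pos i with h0 | hpos
      · rw [h0, ← id0]
        apply prefers_top
        rw [id0]
        exact (hc 0 (by omega)).symm
      · have := hmin (i-1) (by omega)
        push Not at this
        have := right' _ hId (i-1) (by omega) t
          (by rw [id0]; exact inS _ (by omega) 0 (by omega)) (this.2 (by omega))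
        rw [show i - 1 + 1 = i by omega] at this
        exact this (hc i hile).symm
    have h2 : t < x i := by
      apply revlt
      rcases hi with h | ⟨h, ht⟩
      · rw [h, ← rev0]
        apply prefers_top
        rw [rev0]
        exact (hc n le_rfl).symm
      · exact left' _ hRev i h t (by rw [rev0]; exact lastS i h) ht (hc i hile).symm
    exact lt_asymm h1 h2
  refine ⟨?_, ?_⟩
  · intro P hP a b hab
    obtain ⟨s, hs, es⟩ := surj (P 0)
    obtain ⟨i, hi, rfl⟩ := surj a
    obtain ⟨j, hj, rfl⟩ := surj b
    rw [← es] at hab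
    rcases hab with ⟨h1, h2⟩ | ⟨h1, h2⟩
    · have h1 := mono' _ _ hi hj h1
      have h2 := mono' _ _ hj hs h2
      have := left P hP (j-1) (by omega) (x i)
        (by rw [← es]; exact notS _ (by omega) _ (by omega) hs) (inS _ (by omega) _ (by omega))
      rwa [show j - 1 + 1 = j by omega] at this
    · have h1 := mono' _ _ hs hj h1
      have h2 := mono' _ _ hj hi h2
      exact right P hP j (by omega) (x i)
        (by rw [← es]; exact inS _ (by omega) _ (by omega)) (notS _ (by omega) _ (by omega) hi)
  · intro t
    obtain ⟨i, hi, rfl⟩ := surj t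
    rw [hx i (by omega)]
    exact List.getElem_mem _

end PFBRPaper

open PFBRPaper

/-- If exactly one vertex-path of `G_≈^A(D)` connects `a_1` and `a_m`,
then the regular domain `D` is single-peaked w.r.t. `≺` and is a hybrid* domain. -/
theorem unique_path_single_peaked (m : ℕ) [NeZero m] (hm : 3 ≤ m)
    (D : Set (Pref m)) (hD : RegularDomain D)
    (huniq : ∃! l, VertexPathBetween D Set.univ 0 (lastAlt m) l) :
    (∀ P ∈ D, SinglePeaked P) ∧ ∃ p q : Fin m, p < q ∧ IsHybridStar D p q := by
  obtain ⟨l, hl, hu⟩ := huniq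
  obtain ⟨hsp, hmem⟩ := main_struct hm hD l hl hu
  refine ⟨hsp, ⟨0, by omega⟩, ⟨1, by omega⟩, Fin.mk_lt_mk.2 Nat.one_pos, ?_, ?_, ?_⟩
  · intro P hP
    refine ⟨fun r s _ h => hsp P hP r s h, ?_, ?_⟩
    · intro h0 a h1 h2 h3
      have e : P 0 = ⟨0, by omega⟩ := le_antisymm h0 (by simp)
      rw [← e] at h3 ⊢
      exact prefers_top h3
    · intro h0 a h1 h2 h3
      by_cases e : P 0 = ⟨1, by omega⟩
      · rw [← e] at h3 ⊢
        exact prefers_top h3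
      · exact hsp P hP _ _ (Or.inl ⟨lt_of_le_of_ne h2 h3, lt_of_le_of_ne h0 (Ne.symm e)⟩)
  · intro k _ _
    exact ⟨l, hl, hmem k⟩
  · intro h
    simp at h
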